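/- arXiv:1611.03592 — 2 statements merged into one kernel-verified Lean document; each statement's English description precedes it below -/
import Mathlib

section
/- Let n, T, d_x be natural numbers, let A : ℝ^{d_x} → ℝ^{d_x} and C : ℝ^{d_x} → ℝ^{d_y} be linear maps, and for t = 1,…,T let L_t : ℝ^{d_y} → ℝ^{d_x} be a linear map with block decomposition L_t y = Σ_{i=1}^n L^i_t y^i for y = vec(y^1,…,y^n), y^i ∈ ℝ^{d_y^i}. For each i let B^i : ℝ^{d_u^i} → ℝ^{d_x} be linear. Given arbitrary sequences Y^i_t ∈ ℝ^{d_y^i} and U^i_t ∈ ℝ^{d_u^i}, define Z_t ∈ ℝ^{d_x} by Z_1 = Σ_i L^i_1 Y^i_1 and Z_{t+1} = (I − L_{t+1} C)(A Z_t + Σ_i B^i U^i_t) + Σ_i L^i_{t+1} Y^i_{t+1}, and for each i define S^i_t ∈ ℝ^{d_x} by S^i_1 = L^i_1 Y^i_1 and S^i_{t+1} = (I − L_{t+1} C)(A S^i_t + B^i U^i_t) + L^i_{t+1} Y^i_{t+1}. Then Z_t = Σ_{i=1}^n S^i_t for every t = 1,…,T. -/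
/-- Lemma 6 of the paper: the centralized estimate recursion
`Z₀ = Σᵢ Lⁱ₀ Yⁱ₀`, `Z_{t+1} = (I − L_{t+1} C)(A Z_t + Σᵢ Bⁱ Uⁱ_t) + Σᵢ Lⁱ_{t+1} Yⁱ_{t+1}`
decomposes as the sum of the local statistics
`Sⁱ₀ = Lⁱ₀ Yⁱ₀`, `Sⁱ_{t+1} = (I − L_{t+1} C)(A Sⁱ_t + Bⁱ Uⁱ_t) + Lⁱ_{t+1} Yⁱ_{t+1}`,
i.e. `Z_t = Σᵢ Sⁱ_t` for every `t` (time indexed from `0`). -/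
theorem centralized_estimate_decomposes
    (n dx : ℕ) (dyi du : Fin n → ℕ)
    (A : (Fin dx → ℝ) →ₗ[ℝ] (Fin dx → ℝ))
    (C : (Fin dx → ℝ) →ₗ[ℝ] (((i : Fin n) × Fin (dyi i)) → ℝ))
    (L : ℕ → (((i : Fin n) × Fin (dyi i)) → ℝ) →ₗ[ℝ] (Fin dx → ℝ))
    (Li : (i : Fin n) → ℕ → ((Fin (dyi i) → ℝ) →ₗ[ℝ] (Fin dx → ℝ)))
    (hL : ∀ (t : ℕ) (y : ((i : Fin n) × Fin (dyi i)) → ℝ),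
      L t y = ∑ i : Fin n, Li i t (fun ℓ => y ⟨i, ℓ⟩))
    (B : (i : Fin n) → (Fin (du i) → ℝ) →ₗ[ℝ] (Fin dx → ℝ))
    (Y : (i : Fin n) → ℕ → (Fin (dyi i) → ℝ))
    (U : (i : Fin n) → ℕ → (Fin (du i) → ℝ))
    (Z : ℕ → (Fin dx → ℝ)) (S : (i : Fin n) → ℕ → (Fin dx → ℝ))
    (hZ0 : Z 0 = ∑ i : Fin n, Li i 0 (Y i 0))
    (hZ : ∀ t : ℕ, Z (t + 1) =
      ((A (Z t) + ∑ i : Fin n, B i (U i t))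
        - L (t + 1) (C (A (Z t) + ∑ i : Fin n, B i (U i t))))
        + ∑ i : Fin n, Li i (t + 1) (Y i (t + 1)))
    (hS0 : ∀ i : Fin n, S i 0 = Li i 0 (Y i 0))
    (hS : ∀ (i : Fin n) (t : ℕ), S i (t + 1) =
      ((A (S i t) + B i (U i t)) - L (t + 1) (C (A (S i t) + B i (U i t))))
        + Li i (t + 1) (Y i (t + 1))) :
    ∀ t : ℕ, Z t = ∑ i : Fin n, S i t := by
  intro t
  induction t with
  | zero => simp [hZ0, hS0]
  | succ t ih =>
    -- The update of `Z` is affine in `Z t`, with linear part shared by all the `S i`.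
    simp only [hZ, hS, ih, map_add, map_sum, Finset.sum_add_distrib, Finset.sum_sub_distrib]
end

section
/- Let n, T, d_x, p be natural numbers, A : ℝ^{d_x} → ℝ^{d_x}, C^i : ℝ^{d_x} → ℝ^{d_y^i}, B^i : ℝ^{d_u^i} → ℝ^{d_x}, N^i : ℝ^{d_u^i} → ℝ^p, M : ℝ^{d_x} → ℝ^p linear maps; let C : ℝ^{d_x} → ℝ^{d_y} be x ↦ vec(C^1 x,…,C^n x), B u = Σ_i B^i u^i and N u = Σ_i N^i u^i for u = vec(u^1,…,u^n). For t = 1,…,T let K_t : ℝ^{d_x} → Π_i ℝ^{d_u^i} and L_t : ℝ^{d_y} → ℝ^{d_x} (with block decomposition L_t y = Σ_i L^i_t y^i) be linear maps. Suppose there exist linear maps Λ^i : Π_j ℝ^{d_u^j} → ℝ^{d_u^i} with B^i ∘ Λ^i = B and N^i ∘ Λ^i = N for every i. Fix an initial state x_1 ∈ ℝ^{d_x} and noise realizations w_t ∈ ℝ^{d_x}, v^i_t ∈ ℝ^{d_y^i}. Define the centralized trajectory by X_1 = x_1, Y^i_t = C^i X_t + v^i_t, Z_1 = Σ_i L^i_1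 Y^i_1, U_t = K_t Z_t, X_{t+1} = A X_t + B U_t + w_t, Z_{t+1} = (I − L_{t+1}C)(A Z_t + B U_t) + Σ_i L^i_{t+1} Y^i_{t+1}; and define the decentralized trajectory by X'_1 = x_1, Y'^i_t = C^i X'_t + v^i_t, S^i_1 = L^i_1 Y'^i_1, U'^i_t = Λ^i K_t S^i_t, X'_{t+1} = A X'_t + Σ_i B^i U'^i_t + w_t, S^i_{t+1} = (I − L_{t+1}C)(A S^i_t + B^i U'^i_t) + L^i_{t+1} Y'^i_{t+1}. Then for every t = 1,…,T: X_t = X'_t, B U_t = Σ_i B^i U'^i_t, N U_t = Σ_i N^i U'^i_t, and hence M X_t + N U_t = M X'_t + Σ_i N^i U'^i_t. -/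
/-!
The centralized estimate is the sum of the local statistics, `Z t = ∑ i, S i t`. This invariant is
proved by induction on time together with `X t = X' t`. By substitutability, controller `i` acting
with `Λ i (K t (S i t))` has the same effect as the whole team acting with `K t (S i t)`, so by
linearity the joint effect of the decentralized controls is that of the team acting with
`K t (∑ i, S i t)` (`sum_substitute_eq`). Summing the local recursions over `i` therefore
reproduces the centralized recursion.
-/

/-- If `F i ∘ Λ i` is the aggregate map `u ↦ ∑ j, F j (u j)` for every `i`, the total effect of the
substituted local controls `Λ i (k (s i))` is the effect of the control `k (∑ i, s i)`.
Used with `F = B` (dynamics) and `F = N` (cost). -/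
theorem sum_substitute_eq {ι E G : Type*} {V : ι → Type*} [Fintype ι]
    [AddCommGroup E] [Module ℝ E] [AddCommGroup G] [Module ℝ G]
    [∀ i, AddCommGroup (V i)] [∀ i, Module ℝ (V i)]
    (F : (i : ι) → V i →ₗ[ℝ] G) (Λ : (i : ι) → ((j : ι) → V j) →ₗ[ℝ] V i)
    (hΛ : ∀ (i : ι) (u : (j : ι) → V j), F i (Λ i u) = ∑ j, F j (u j))
    (k : E →ₗ[ℝ] ((j : ι) → V j)) (s : ι → E) :
    ∑ i, F i (Λ i (k (s i))) = ∑ j, F j (k (∑ i, s i) j) := by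
  simp only [hΛ, map_sum, Finset.sum_apply]
  exact Finset.sum_comm

/-- Deterministic core of the proof of Theorem 2 of the paper: for every realization of
the initial state `x₁` and the noises `w_t, vⁱ_t`, the decentralized strategies
`U'ⁱ_t = Λⁱ K_t Sⁱ_t` (where the substitutability maps satisfy `Bⁱ Λⁱ = B`, `Nⁱ Λⁱ = N`
and `Sⁱ_t` is controller `i`'s local statistic) generate the same state trajectory and
the same cost terms `M X_t + N U_t` as the centralized strategy `U_t = K_t Z_t` based on
the centralized estimate recursion. Time is indexed from `0`. -/
theorem decentralized_matches_centralized_pathwise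
    (n dx p : ℕ) (dyi du : Fin n → ℕ)
    (A : (Fin dx → ℝ) →ₗ[ℝ] (Fin dx → ℝ))
    (Ci : (i : Fin n) → (Fin dx → ℝ) →ₗ[ℝ] (Fin (dyi i) → ℝ))
    (B : (i : Fin n) → (Fin (du i) → ℝ) →ₗ[ℝ] (Fin dx → ℝ))
    (N : (i : Fin n) → (Fin (du i) → ℝ) →ₗ[ℝ] (Fin p → ℝ))
    (M : (Fin dx → ℝ) →ₗ[ℝ] (Fin p → ℝ))
    (C : (Fin dx → ℝ) →ₗ[ℝ] (((i : Fin n) × Fin (dyi i)) → ℝ))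
    (hC : ∀ (x : Fin dx → ℝ) (i : Fin n) (ℓ : Fin (dyi i)), C x ⟨i, ℓ⟩ = Ci i x ℓ)
    (K : ℕ → (Fin dx → ℝ) →ₗ[ℝ] ((i : Fin n) → (Fin (du i) → ℝ)))
    (L : ℕ → (((i : Fin n) × Fin (dyi i)) → ℝ) →ₗ[ℝ] (Fin dx → ℝ))
    (Li : (i : Fin n) → ℕ → ((Fin (dyi i) → ℝ) →ₗ[ℝ] (Fin dx → ℝ)))
    (hL : ∀ (t : ℕ) (y : ((i : Fin n) × Fin (dyi i)) → ℝ),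
      L t y = ∑ i : Fin n, Li i t (fun ℓ => y ⟨i, ℓ⟩))
    -- substitutability maps (Assumption 3 / Lemma 3)
    (Λ : (i : Fin n) → ((j : Fin n) → (Fin (du j) → ℝ)) →ₗ[ℝ] (Fin (du i) → ℝ))
    (hΛB : ∀ (i : Fin n) (u : (j : Fin n) → (Fin (du j) → ℝ)),
      B i (Λ i u) = ∑ j : Fin n, B j (u j))
    (hΛN : ∀ (i : Fin n) (u : (j : Fin n) → (Fin (du j) → ℝ)),
      N i (Λ i u) = ∑ j : Fin n, N j (u j))
    -- fixed realizations of the initial state and the noises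
    (x1 : Fin dx → ℝ) (w : ℕ → (Fin dx → ℝ)) (v : (i : Fin n) → ℕ → (Fin (dyi i) → ℝ))
    -- centralized closed-loop trajectory: X, Z with U_t = K_t Z_t and Yⁱ_t = Cⁱ X_t + vⁱ_t
    (X Z : ℕ → (Fin dx → ℝ))
    (hX0 : X 0 = x1)
    (hX : ∀ t : ℕ, X (t + 1) = A (X t) + (∑ i : Fin n, B i (K t (Z t) i)) + w t)
    (hZ0 : Z 0 = ∑ i : Fin n, Li i 0 (Ci i (X 0) + v i 0))
    (hZ : ∀ t : ℕ, Z (t + 1) =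
      ((A (Z t) + ∑ i : Fin n, B i (K t (Z t) i))
        - L (t + 1) (C (A (Z t) + ∑ i : Fin n, B i (K t (Z t) i))))
        + ∑ i : Fin n, Li i (t + 1) (Ci i (X (t + 1)) + v i (t + 1)))
    -- decentralized closed-loop trajectory: X', S with U'ⁱ_t = Λⁱ K_t Sⁱ_t and
    -- Y'ⁱ_t = Cⁱ X'_t + vⁱ_t
    (X' : ℕ → (Fin dx → ℝ)) (S : (i : Fin n) → ℕ → (Fin dx → ℝ))
    (hX'0 : X' 0 = x1)
    (hX' : ∀ t : ℕ, X' (t + 1) =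
      A (X' t) + (∑ i : Fin n, B i (Λ i (K t (S i t)))) + w t)
    (hS0 : ∀ i : Fin n, S i 0 = Li i 0 (Ci i (X' 0) + v i 0))
    (hS : ∀ (i : Fin n) (t : ℕ), S i (t + 1) =
      ((A (S i t) + B i (Λ i (K t (S i t))))
        - L (t + 1) (C (A (S i t) + B i (Λ i (K t (S i t))))))
        + Li i (t + 1) (Ci i (X' (t + 1)) + v i (t + 1))) :
    ∀ t : ℕ,
      X t = X' t ∧
      (∑ i : Fin n, B i (K t (Z t) i)) = (∑ i : Fin n, B i (Λ i (K t (S i t)))) ∧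
      (∑ i : Fin n, N i (K t (Z t) i)) = (∑ i : Fin n, N i (Λ i (K t (S i t)))) ∧
      M (X t) + ∑ i : Fin n, N i (K t (Z t) i)
        = M (X' t) + ∑ i : Fin n, N i (Λ i (K t (S i t))) := by
  have key : ∀ t : ℕ, X t = X' t ∧ Z t = ∑ i, S i t := by
    intro t
    induction t with
    | zero =>
      refine ⟨by rw [hX0, hX'0], ?_⟩
      simp only [hZ0, hS0, hX0, hX'0]
    | succ t ih =>
      obtain ⟨ihX, ihZ⟩ := ih
      have hB : ∑ i, B i (K t (Z t) i) = ∑ i, B i (Λ i (K t (S i t))) := by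
        rw [ihZ, sum_substitute_eq B Λ hΛB]
      have hXX : X (t + 1) = X' (t + 1) := by rw [hX, hX', ihX, hB]
      refine ⟨hXX, ?_⟩
      have hpred : A (Z t) + ∑ i, B i (K t (Z t) i)
          = ∑ i, (A (S i t) + B i (Λ i (K t (S i t)))) := by
        rw [hB, ihZ, map_sum, Finset.sum_add_distrib]
      rw [hZ, hpred, hXX, Finset.sum_congr rfl fun i _ => hS i t, map_sum C, map_sum (L (t + 1)),
        ← Finset.sum_sub_distrib, ← Finset.sum_add_distrib]
  intro t
  obtain ⟨hXt, hZt⟩ := key t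
  have hN : ∑ i, N i (K t (Z t) i) = ∑ i, N i (Λ i (K t (S i t))) := by
    rw [hZt, sum_substitute_eq N Λ hΛN]
  exact ⟨hXt, by rw [hZt, sum_substitute_eq B Λ hΛB], hN, by rw [hXt, hN]⟩
end
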